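/- Let L be a finite-dimensional restricted Lie algebra over a field F of prime characteristic p, and let I be a minimal p-ideal of L. Then I is either p-perfect (i.e. I = [I,I] + ⟨I^[p]⟩_F) or strongly abelian (i.e. abelian with identically zero p-mapping). -/

import Mathlib

universe u

noncomputable section

open scoped BigOperators

/-- Iterated adjoint action: `adWord [a₁,…,aₖ] z = ⁅a₁, ⁅a₂, … ⁅aₖ, z⁆…⁆⁆`. -/
def adWord {L : Type u} [LieRing L] : List L → L → L
  | [], z => z
  | a :: l, z => ⁅a, adWord l z⁆

/-- Jacobson's universal sum `Λ(x,y) = ∑_{i=1}^{p-1} sᵢ(x,y)`, where `i • sᵢ(x,y)` is the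
coefficient of `t^(i-1)` in `ad(t•x+y)^(p-1) (x)`. -/
def jacobsonSum (p : ℕ) (F : Type u) {L : Type u} [Field F] [LieRing L] [LieAlgebra F L]
    (x y : L) : L :=
  ∑ i ∈ Finset.Icc 1 (p - 1),
    (((i : F))⁻¹ •
      ∑ w ∈ Finset.univ.filter
          (fun w : Fin (p - 1) → Bool =>
            (Finset.univ.filter (fun j => w j = true)).card = i - 1),
        adWord ((List.ofFn w).map (fun b => if b then x else y)) x)

/-- A restricted Lie algebra over a field of characteristic `p` is a Lie algebra equipped
with a `p`-mapping `x ↦ x^[p]` satisfying Jacobson's axioms. -/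
class RestrictedLieAlgebra (p : ℕ) (F L : Type u) [Field F] [LieRing L] [LieAlgebra F L] :
    Type u where
  pMap : L → L
  pMap_smul : ∀ (a : F) (x : L), pMap (a • x) = a ^ p • pMap x
  pMap_add : ∀ x y : L, pMap (x + y) = pMap x + pMap y + jacobsonSum p F x y
  ad_pMap : ∀ x y : L, ⁅pMap x, y⁆ = ((LieAlgebra.ad F L x) ^ p) y

/-- The `p`-mapping of a restricted Lie algebra. -/
def pmap (p : ℕ) (F : Type u) {L : Type u} [Field F] [LieRing L] [LieAlgebra F L]
    [RestrictedLieAlgebra p F L] : L → L :=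
  RestrictedLieAlgebra.pMap (p := p) (F := F)

section ChiefCore

variable (p : ℕ) (F L : Type u) [Field F] [LieRing L] [LieAlgebra F L]
  [RestrictedLieAlgebra p F L]

/-- A `p`-ideal of a restricted Lie algebra: an ideal closed under the `p`-mapping. -/
def IsPIdeal (I : LieIdeal F L) : Prop :=
  ∀ x ∈ I, pmap p F x ∈ I

/-- A `p`-chief series of a restricted Lie algebra: an ascending chain of `p`-ideals
`0 = L₀ ⊂ L₁ ⊂ ⋯ ⊂ Lₙ = L` such that each `Lⱼ/Lⱼ₋₁` is a minimal nonzero `p`-ideal of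
`L/Lⱼ₋₁` (expressed via the correspondence between `p`-ideals of `L/Lⱼ₋₁` and `p`-ideals
of `L` containing `Lⱼ₋₁`). -/
structure PChiefSeries where
  n : ℕ
  chain : Fin (n + 1) → LieIdeal F L
  chain_pIdeal : ∀ j, IsPIdeal p F L (chain j)
  chain_bot : chain 0 = ⊥
  chain_top : chain (Fin.last n) = ⊤
  chain_lt : ∀ j : Fin n, chain j.castSucc < chain j.succ
  chain_min : ∀ j : Fin n, ∀ K : LieIdeal F L, IsPIdeal p F L K →
    chain j.castSucc ≤ K → K ≤ chain j.succ → K = chain j.castSucc ∨ K = chain j.succ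

variable {p F L}

/-- The `p`-chief factor `Lⱼ/Lⱼ₋₁` is strongly abelian, i.e. it is an abelian Lie algebra
with zero `p`-mapping. -/
def PChiefSeries.IsStronglyAbelianFactor (c : PChiefSeries p F L) (j : Fin c.n) : Prop :=
  (∀ x ∈ c.chain j.succ, ∀ y ∈ c.chain j.succ, ⁅x, y⁆ ∈ c.chain j.castSucc) ∧
    ∀ x ∈ c.chain j.succ, pmap p F x ∈ c.chain j.castSucc

/-- The exact sequence `0 → Lⱼ/Lⱼ₋₁ → L/Lⱼ₋₁ → L/Lⱼ → 0` splits in the category of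
restricted Lie algebras, i.e. `Lⱼ/Lⱼ₋₁` has a complement in `L/Lⱼ₋₁` which is a restricted
subalgebra (expressed via the corresponding subspace `K` of `L`). -/
def PChiefSeries.IsSplitFactor (c : PChiefSeries p F L) (j : Fin c.n) : Prop :=
  ∃ K : Submodule F L, (∀ x ∈ K, ∀ y ∈ K, ⁅x, y⁆ ∈ K) ∧ (∀ x ∈ K, pmap p F x ∈ K) ∧
    (c.chain j.castSucc).toSubmodule ≤ K ∧
    K ⊓ (c.chain j.succ).toSubmodule = (c.chain j.castSucc).toSubmodule ∧
    K ⊔ (c.chain j.succ).toSubmodule = ⊤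

end ChiefCore

/-!
For `x ∈ I` we have `⁅x^[p], l⁆ = (ad x)^p l`, and since `p ≥ 2` the first application of `ad x`
moves `l` into `I`, so that the last one lands in `⁅I, I⁆`. Hence `⁅L, I^[p]⁆ ⊆ ⁅I, I⁆`, which makes
the subspace `⁅I, I⁆ + ⟨I^[p]⟩` a `p`-ideal inside `I`. By minimality it is `I` or `0`.
-/

section AdPow

variable {R L : Type*} [CommRing R] [LieRing L] [LieAlgebra R L] {I : LieIdeal R L} {x : L}

lemma ad_pow_succ_apply_mem (hx : x ∈ I) (n : ℕ) (y : L) :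
    (LieAlgebra.ad R L x ^ (n + 1)) y ∈ I := by
  rw [pow_succ', Module.End.mul_apply, LieAlgebra.ad_apply]
  exact lie_mem_left R L I x _ hx

lemma ad_pow_apply_mem_lie (hx : x ∈ I) {n : ℕ} (hn : 2 ≤ n) (y : L) :
    (LieAlgebra.ad R L x ^ n) y ∈ ⁅I, I⁆ := by
  obtain ⟨k, rfl⟩ := Nat.exists_eq_add_of_le' hn
  rw [pow_succ', Module.End.mul_apply, LieAlgebra.ad_apply]
  exact LieSubmodule.lie_mem_lie hx (ad_pow_succ_apply_mem hx k y)

end AdPow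

section PDerivedIdeal

variable {p : ℕ} {F L : Type u} [Field F] [LieRing L] [LieAlgebra F L]
  [RestrictedLieAlgebra p F L] {I K : LieIdeal F L}

lemma lie_pmap_mem_lie (hp : 2 ≤ p) {x : L} (hx : x ∈ I) (l : L) :
    ⁅l, pmap p F x⁆ ∈ ⁅I, I⁆ := by
  have lie_pmap : ⁅pmap p F x, l⁆ = (LieAlgebra.ad F L x ^ p) l :=
    RestrictedLieAlgebra.ad_pMap x l
  rw [← lie_skew, lie_pmap]
  exact neg_mem (ad_pow_apply_mem_lie hx hp l)

lemma lie_mem_lie_of_mem_span_pmap (hp : 2 ≤ p) {z : L}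
    (hz : z ∈ Submodule.span F (pmap p F '' I)) (l : L) : ⁅l, z⁆ ∈ ⁅I, I⁆ := by
  have span_le : Submodule.span F (pmap p F '' I) ≤
      (⁅I, I⁆ : LieIdeal F L).toSubmodule.comap (LieAlgebra.ad F L l) := by
    rw [Submodule.span_le]
    rintro _ ⟨x, hx, rfl⟩
    exact lie_pmap_mem_lie hp hx l
  exact span_le hz

/-- The ideal `⁅I, I⁆ + ⟨I^[p]⟩` of `L`. A `p`-ideal `I` is `p`-perfect when it equals this ideal,
and strongly abelian when this ideal vanishes. For `p < 2` the subspace need not be an ideal, so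
`2 ≤ p` is part of the data. -/
def pDerivedIdeal (hp : 2 ≤ p) (I : LieIdeal F L) : LieIdeal F L where
  __ := (⁅I, I⁆ : LieIdeal F L).toSubmodule ⊔ Submodule.span F (pmap p F '' I)
  lie_mem {l m} hm := by
    obtain ⟨a, ha, b, hb, rfl⟩ := Submodule.mem_sup.1 hm
    rw [lie_add]
    exact Submodule.mem_sup_left
      (add_mem (LieSubmodule.lie_mem _ ha) (lie_mem_lie_of_mem_span_pmap hp hb l))

lemma toSubmodule_pDerivedIdeal (hp : 2 ≤ p) :
    (pDerivedIdeal hp I).toSubmodule =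
      Submodule.span F {z : L | ∃ x ∈ I, ∃ y ∈ I, ⁅x, y⁆ = z} ⊔
        Submodule.span F {z : L | ∃ x ∈ I, pmap p F x = z} := by
  rw [← LieSubmodule.lieIdeal_oper_eq_linear_span']
  rfl

lemma pDerivedIdeal_le_iff (hp : 2 ≤ p) :
    pDerivedIdeal hp I ≤ K ↔
      (∀ x ∈ I, ∀ y ∈ I, ⁅x, y⁆ ∈ K) ∧ ∀ x ∈ I, pmap p F x ∈ K := by
  rw [← LieSubmodule.toSubmodule_le_toSubmodule, toSubmodule_pDerivedIdeal, sup_le_iff,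
    Submodule.span_le, Submodule.span_le]
  constructor
  · rintro ⟨hlie, hpmap⟩
    exact ⟨fun x hx y hy ↦ hlie ⟨x, hx, y, hy, rfl⟩, fun x hx ↦ hpmap ⟨x, hx, rfl⟩⟩
  · rintro ⟨hlie, hpmap⟩
    constructor
    · rintro _ ⟨x, hx, y, hy, rfl⟩
      exact hlie x hx y hy
    · rintro _ ⟨x, hx, rfl⟩
      exact hpmap x hx

lemma pDerivedIdeal_eq_bot_iff (hp : 2 ≤ p) :
    pDerivedIdeal hp I = ⊥ ↔
      (∀ x ∈ I, ∀ y ∈ I, ⁅x, y⁆ = 0) ∧ ∀ x ∈ I, pmap p F x = 0 := by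
  simp only [← le_bot_iff, pDerivedIdeal_le_iff, LieSubmodule.mem_bot]

lemma IsPIdeal.pDerivedIdeal_le (hI : IsPIdeal p F L I) (hp : 2 ≤ p) : pDerivedIdeal hp I ≤ I :=
  (pDerivedIdeal_le_iff hp).2 ⟨fun x _ _ hy ↦ lie_mem_right F L I x _ hy, hI⟩

lemma IsPIdeal.of_pDerivedIdeal_le {hp : 2 ≤ p} (hK : pDerivedIdeal hp I ≤ K) (hKI : K ≤ I) :
    IsPIdeal p F L K :=
  fun x hx ↦ ((pDerivedIdeal_le_iff hp).1 hK).2 x (hKI hx)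

lemma IsPIdeal.isPIdeal_pDerivedIdeal (hI : IsPIdeal p F L I) (hp : 2 ≤ p) :
    IsPIdeal p F L (pDerivedIdeal hp I) :=
  .of_pDerivedIdeal_le le_rfl (hI.pDerivedIdeal_le hp)

end PDerivedIdeal

theorem minimal_pIdeal_pPerfect_or_stronglyAbelian_general
    {p : ℕ} (hp : 2 ≤ p) {F L : Type u} [Field F] [LieRing L] [LieAlgebra F L]
    [RestrictedLieAlgebra p F L] {I : LieIdeal F L} (hI : IsPIdeal p F L I)
    (hmin : ∀ K : LieIdeal F L, IsPIdeal p F L K → K ≤ I → K = ⊥ ∨ K = I) :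
    I.toSubmodule =
        Submodule.span F {z : L | ∃ x ∈ I, ∃ y ∈ I, ⁅x, y⁆ = z} ⊔
          Submodule.span F {z : L | ∃ x ∈ I, pmap p F x = z} ∨
      (∀ x ∈ I, ∀ y ∈ I, ⁅x, y⁆ = 0) ∧ ∀ x ∈ I, pmap p F x = 0 := by
  rcases hmin _ (hI.isPIdeal_pDerivedIdeal hp) (hI.pDerivedIdeal_le hp) with eq_bot | eq_self
  · exact .inr ((pDerivedIdeal_eq_bot_iff hp).1 eq_bot)
  · left
    rw [← toSubmodule_pDerivedIdeal hp, eq_self]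

/-- A minimal `p`-ideal `I` of a finite-dimensional restricted Lie algebra
`L` over a field of prime characteristic `p` is either `p`-perfect, i.e.
`I = [I,I] + ⟨I^[p]⟩_F`, or strongly abelian, i.e. abelian with zero `p`-mapping. -/
theorem minimal_pIdeal_pPerfect_or_stronglyAbelian
    (p : ℕ) [Fact p.Prime] (F L : Type u) [Field F] [CharP F p] [LieRing L] [LieAlgebra F L]
    [RestrictedLieAlgebra p F L] [FiniteDimensional F L]
    (I : LieIdeal F L) (hI : IsPIdeal p F L I) (hne : I ≠ ⊥)
    (hmin : ∀ K : LieIdeal F L, IsPIdeal p F L K → K ≤ I → K = ⊥ ∨ K = I) :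
    I.toSubmodule =
        Submodule.span F {z : L | ∃ x ∈ I, ∃ y ∈ I, ⁅x, y⁆ = z} ⊔
          Submodule.span F {z : L | ∃ x ∈ I, pmap p F x = z} ∨
      (∀ x ∈ I, ∀ y ∈ I, ⁅x, y⁆ = 0) ∧ ∀ x ∈ I, pmap p F x = 0 :=
  minimal_pIdeal_pPerfect_or_stronglyAbelian_general (Fact.out : p.Prime).two_le hI hmin

end
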